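/- Let 0 ≤ α < β ≤ 2π, let S = {(cos θ, sin θ) : α ≤ θ ≤ β} be a unit circular arc, and let P be the uniform probability distribution on S. Then for every n ∈ ℕ the set αₙ = { (2n/(β−α)) sin((β−α)/(2n)) · (cos(α + (2j−1)(β−α)/(2n)), sin(α + (2j−1)(β−α)/(2n))) : j = 1, 2, …, n } forms an optimal set of n-means for P, and the corresponding quantization error is Vₙ(P) = 1 − (4n²/(β−α)²) sin²((β−α)/(2n)). -/

import Mathlib

open MeasureTheory Real Filter
open scoped ENNReal

noncomputable section

/-- The plane `ℝ²` with the Euclidean norm. -/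
abbrev E2 : Type := EuclideanSpace ℝ (Fin 2)

/-- The point `(a, b)` of `ℝ²`. -/
def pt (a b : ℝ) : E2 := !₂[a, b]

/-- The `n`th quantization error of a Borel probability measure `P` on `ℝ²`:
the infimum of `∫ min_{a ∈ α} ‖x - a‖² dP(x)` over all (nonempty) finite sets
`α ⊆ ℝ²` with at most `n` elements. -/
def quantErr (P : Measure E2) (n : ℕ) : ℝ :=
  sInf {v : ℝ | ∃ α : Set E2, α.Finite ∧ α.Nonempty ∧ α.ncard ≤ n ∧
    v = ∫ x, sInf ((fun a => ‖x - a‖ ^ 2) '' α) ∂P}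

/-- `α` is an optimal set of `n`-means for `P` if it attains the `n`th
quantization error. -/
def IsOptimalSet (P : Measure E2) (n : ℕ) (α : Set E2) : Prop :=
  α.Finite ∧ α.Nonempty ∧ α.ncard ≤ n ∧
    (∫ x, sInf ((fun a => ‖x - a‖ ^ 2) '' α) ∂P) = quantErr P n

/-- The arc `{(cos θ, sin θ) : a ≤ θ ≤ b}` of the unit circle. -/
def arcS (a b : ℝ) : Set E2 :=
  {p | ∃ θ : ℝ, a ≤ θ ∧ θ ≤ b ∧ p = pt (Real.cos θ) (Real.sin θ)}

/-- The uniform probability distribution on the arc `arcS a b`: density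
`1/(b-a)` with respect to one-dimensional Hausdorff (arc-length) measure. -/
def arcP (a b : ℝ) : Measure E2 :=
  (ENNReal.ofReal (b - a))⁻¹ • (μH[1] : Measure E2).restrict (arcS a b)


def gam (t : ℝ) : E2 := pt (Real.cos t) (Real.sin t)

lemma norm_pt_sq (x y : ℝ) : ‖pt x y‖ ^ 2 = x ^ 2 + y ^ 2 := by
  rw [pt, EuclideanSpace.norm_sq_eq]; simp

lemma pt_sub (x y z w : ℝ) : pt x y - pt z w = pt (x - z) (y - w) := by
  ext i; fin_cases i <;> simp [pt]

lemma pt_eta (c : E2) : pt (c 0) (c 1) = c := by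
  ext i; fin_cases i <;> simp [pt]

lemma gam_cont : Continuous gam := by
  unfold gam pt
  fun_prop

lemma gam_sub_sq (s t : ℝ) : ‖gam s - gam t‖ ^ 2 = 4 * Real.sin ((s - t) / 2) ^ 2 := by
  have h : Real.cos (s - t) = 1 - 2 * Real.sin ((s - t) / 2) ^ 2 := by
    have := Real.cos_two_mul ((s - t) / 2)
    have h3 := Real.sin_sq_add_cos_sq ((s - t) / 2)
    rw [show 2 * ((s - t) / 2) = s - t by ring] at this
    linarith
  rw [gam, gam, pt_sub, norm_pt_sq]
  rw [Real.cos_sub] at h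
  nlinarith [Real.sin_sq_add_cos_sq s, Real.sin_sq_add_cos_sq t]

lemma gam_dist (s t : ℝ) : dist (gam s) (gam t) = 2 * |Real.sin ((s - t) / 2)| := by
  rw [dist_eq_norm, ← abs_of_nonneg (norm_nonneg (gam s - gam t)),
    show 2 * |Real.sin ((s - t) / 2)| = |2 * Real.sin ((s - t) / 2)| by simp [abs_mul]]
  rw [← sq_eq_sq_iff_abs_eq_abs, gam_sub_sq]; ring

lemma gam_lip : LipschitzWith 1 gam := by
  apply LipschitzWith.of_dist_le_mul
  intro s t
  rw [gam_dist, Real.dist_eq]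
  have := Real.abs_sin_le_abs (x := (s - t) / 2)
  rw [abs_div] at this
  simp at this ⊢
  linarith

lemma gam_lower {d s t : ℝ} (hd1 : d ≤ 1) (h : |s - t| ≤ d) :
    (1 - d) * |s - t| ≤ dist (gam s) (gam t) := by
  rw [gam_dist]
  have hx0 : 0 ≤ |s - t| := abs_nonneg _
  have key : ∀ x : ℝ, 0 ≤ x → x ≤ d → (1 - d) * x ≤ 2 * Real.sin (x / 2) := by
    intro x hx hxd
    rcases hx.eq_or_lt with rfl | hx
    · simp
    have := Real.sin_gt_sub_cube (x := x / 2) (by positivity) 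
    have h4 : x ^ 3 ≤ d * x := by
      nlinarith [mul_pos hx hx, mul_nonneg hx.le (sub_nonneg.2 hxd), mul_nonneg (mul_pos hx hx).le (sub_nonneg.2 (hxd.trans hd1))]
    nlinarith
  have := key _ hx0 h
  have h5 : Real.sin (|s - t| / 2) ≤ |Real.sin ((s - t) / 2)| := by
    rcases abs_cases (s - t) with ⟨h, -⟩ | ⟨h, -⟩
    · rw [h]; exact le_abs_self _
    · rw [h, neg_div, Real.sin_neg]; exact neg_le_abs _
  linarith

lemma gam_injOn {a b : ℝ} (h : b - a ≤ 2 * π) : Set.InjOn gam (Set.Ico a b) := by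
  intro s hs t ht hst
  have h0 : dist (gam s) (gam t) = 0 := by rw [hst, dist_self]
  rw [gam_dist] at h0
  have h1 : Real.sin ((s - t) / 2) = 0 := by simpa using h0
  have := (Real.sin_eq_zero_iff_of_lt_of_lt (x := (s - t) / 2) (by linarith [hs.1, ht.2]) (by linarith [hs.2, ht.1])).1 h1
  linarith

lemma vol_le_small {d : ℝ} (hd1 : d < 1) {A : Set ℝ} 
    (hA : ∀ s ∈ A, ∀ t ∈ A, |s - t| ≤ d) :
    volume A ≤ (Real.toNNReal (1 - d)⁻¹ : ℝ≥0∞) * μH[1] (gam '' A) := by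
  have hp : 0 < 1 - d := by linarith
  have inj : Set.InjOn gam A := by
    intro s hs t ht hst
    have := gam_lower hd1.le (hA s hs t ht)
    rw [hst, dist_self] at this
    have h0 : |s - t| = 0 := le_antisymm (by nlinarith [abs_nonneg (s - t)]) (abs_nonneg _)
    exact sub_eq_zero.1 (abs_eq_zero.1 h0)
  have hl : LipschitzOnWith (Real.toNNReal (1 - d)⁻¹) (Function.invFunOn gam A) (gam '' A) := by
    apply LipschitzOnWith.of_dist_le_mul
    rintro _ ⟨s, hs, rfl⟩ _ ⟨t, ht, rfl⟩
    rw [inj.leftInvOn_invFunOn hs, inj.leftInvOn_invFunOn ht, Real.coe_toNNReal _ (by positivity),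
      Real.dist_eq, inv_mul_eq_div, le_div_iff₀ hp]
    linarith [gam_lower hd1.le (hA s hs t ht)]
  have := hl.hausdorffMeasure_image_le (d := 1) zero_le_one
  rw [inj.leftInvOn_invFunOn.image_image, hausdorffMeasure_real, ENNReal.rpow_one] at this
  exact this

lemma vol_le {a b : ℝ} (h : b - a ≤ 2 * π) {A : Set ℝ} (hA : MeasurableSet A)
    (hAs : A ⊆ Set.Ico a b) : volume A ≤ μH[1] (gam '' A) := by
  have main : ∀ d : ℝ, 0 < d → d < 1 →
      volume A ≤ (Real.toNNReal (1 - d)⁻¹ : ℝ≥0∞) * μH[1] (gam '' A) := by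
    intro d hd0 hd1
    let I : ℤ → Set ℝ := fun i => Set.Ico (i • d) ((i + 1) • d)
    have hU : ⋃ i, I i = Set.univ := iUnion_Ico_zsmul hd0
    have hdis : Pairwise (Function.onFun Disjoint I) := Set.pairwise_disjoint_Ico_zsmul d
    have hAU : A = ⋃ i, A ∩ I i := by rw [← Set.inter_iUnion, hU, Set.inter_univ]
    have hinj := gam_injOn h
    have hm : ∀ i, MeasurableSet (A ∩ I i) := fun i => hA.inter measurableSet_Ico
    have hd2 : Pairwise (Function.onFun Disjoint fun i => A ∩ I i) := fun i j hij =>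
      (hdis hij).mono Set.inter_subset_right Set.inter_subset_right
    have e1 : volume A = ∑' i, volume (A ∩ I i) := by
      conv_lhs => rw [hAU]
      exact measure_iUnion hd2 hm
    have e2 : μH[1] (gam '' A) = ∑' i, μH[1] (gam '' (A ∩ I i)) := by
      conv_lhs => rw [hAU, Set.image_iUnion]
      apply measure_iUnion
      · intro i j hij
        refine Set.disjoint_image_image ?_
        intro s hs t ht hst
        have := hinj (hAs hs.1) (hAs ht.1) hst
        subst this
        exact Set.disjoint_left.1 (hd2 hij) hs ht
      · intro i
        exact (hm i).image_of_continuousOn_injOn gam_cont.continuousOn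
          (hinj.mono (Set.inter_subset_left.trans hAs))
    rw [e1, e2, ← ENNReal.tsum_mul_left]
    refine ENNReal.tsum_le_tsum fun i => vol_le_small hd1 ?_
    intro s hs t ht
    have h1 := hs.2
    have h2 := ht.2
    simp only [I, Set.mem_Ico, zsmul_eq_mul, Int.cast_add, Int.cast_one] at h1 h2
    rw [abs_le]; constructor <;> linarith [h1.1, h1.2, h2.1, h2.2]
  by_cases htop : μH[1] (gam '' A) = ⊤
  · rw [htop]; exact le_top
  have ht : Tendsto (fun d : ℝ => (Real.toNNReal (1 - d)⁻¹ : ℝ≥0∞) * μH[1] (gam '' A))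
      (nhdsWithin 0 (Set.Ioi 0)) (nhds (1 * μH[1] (gam '' A))) := by
    apply ENNReal.Tendsto.mul_const _ (Or.inr htop)
    have h1 : Tendsto (fun d : ℝ => (1 - d)⁻¹) (nhds 0) (nhds (1 - 0)⁻¹) := by
      apply Tendsto.inv₀ _ (by norm_num)
      exact tendsto_const_nhds.sub tendsto_id
    have h2 := ENNReal.tendsto_ofReal (h1.mono_left (nhdsWithin_le_nhds (s := Set.Ioi 0)))
    simpa [ENNReal.ofReal] using h2
  rw [one_mul] at ht
  refine ge_of_tendsto ht ?_
  filter_upwards [Ioo_mem_nhdsGT (zero_lt_one' ℝ)] with d hd using main d hd.1 hd.2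

lemma arcS_eq (a b : ℝ) : arcS a b = gam '' Set.Icc a b := by
  ext p
  constructor
  · rintro ⟨t, h1, h2, rfl⟩; exact ⟨t, ⟨h1, h2⟩, rfl⟩
  · rintro ⟨t, ⟨h1, h2⟩, rfl⟩; exact ⟨t, h1, h2, rfl⟩

lemma haus_eq {a b : ℝ} (h : b - a ≤ 2 * π) :
    (μH[1] : Measure E2).restrict (arcS a b) = (volume.restrict (Set.Icc a b)).map gam := by
  have hm := gam_cont.measurable
  ext B hB
  rw [Measure.map_apply hm hB, Measure.restrict_apply (hm hB), Measure.restrict_apply hB, arcS_eq,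
    Set.inter_comm B, ← Set.image_inter_preimage, Set.inter_comm]
  apply le_antisymm
  · have := gam_lip.hausdorffMeasure_image_le (d := 1) zero_le_one (gam ⁻¹' B ∩ Set.Icc a b)
    simpa [hausdorffMeasure_real] using this
  · have h1 : volume (gam ⁻¹' B ∩ Set.Icc a b) = volume (gam ⁻¹' B ∩ Set.Ico a b) :=
      measure_congr ((ae_eq_refl _).inter Ico_ae_eq_Icc.symm)
    rw [h1]
    refine (vol_le h ((hm hB).inter measurableSet_Ico) Set.inter_subset_right).trans ?_
    exact measure_mono (Set.image_mono (Set.inter_subset_inter_right _ Set.Ico_subset_Icc_self))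

lemma integral_arcP {a b : ℝ} (hab : a < b) (h : b - a ≤ 2 * π) {f : E2 → ℝ} (hf : Continuous f) :
    ∫ x, f x ∂(arcP a b) = (b - a)⁻¹ * ∫ t in Set.Icc a b, f (gam t) := by
  rw [arcP, haus_eq h, integral_smul_measure, integral_map gam_cont.aemeasurable
    hf.aestronglyMeasurable, ENNReal.toReal_inv, ENNReal.toReal_ofReal (by linarith), smul_eq_mul]

lemma cont_sInf {α : Set E2} (hf : α.Finite) (hne : α.Nonempty) :
    Continuous fun x : E2 => sInf ((fun a => ‖x - a‖ ^ 2) '' α) := by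
  have hne' : hf.toFinset.Nonempty := by simpa using hne
  have : (fun x : E2 => sInf ((fun a => ‖x - a‖ ^ 2) '' α)) =
      fun x => hf.toFinset.inf' hne' (fun a => ‖x - a‖ ^ 2) := by
    ext x
    rw [Finset.inf'_eq_csInf_image]; simp
  rw [this]
  apply Continuous.finset_inf'_apply
  intro i _
  fun_prop

lemma sin_tangent {x y : ℝ} (hx : x ∈ Set.Icc 0 π) (hy : y ∈ Set.Icc 0 π) :
    Real.sin x ≤ Real.sin y + Real.cos y * (x - y) := by
  have hc : ConcaveOn ℝ (Set.Icc 0 π) Real.sin := strictConcaveOn_sin_Icc.concaveOn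
  rcases lt_trichotomy x y with h | h | h
  · have := hc.le_slope_of_hasDerivAt hx hy h (Real.hasDerivAt_sin y)
    rw [slope_def_field, le_div_iff₀ (by linarith)] at this
    linarith
  · subst h; simp
  · have := hc.slope_le_of_hasDerivAt hy hx h (Real.hasDerivAt_sin y)
    rw [slope_def_field, div_le_iff₀ (by linarith)] at this
    linarith

def JJ (t : ℝ) : ℝ := ∫ s in (0:ℝ)..1, Real.sin (t * s)
def DD (t : ℝ) : ℝ := ∫ s in (0:ℝ)..1, s * Real.cos (t * s)

lemma mul_JJ (t : ℝ) : t * JJ t = 1 - Real.cos t := by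
  rw [JJ, intervalIntegral.mul_integral_comp_mul_left, integral_sin]; simp

lemma DD_pi : DD π = -2 / π ^ 2 := by
  have hp := Real.pi_ne_zero
  have : ∀ s ∈ Set.uIcc (0:ℝ) 1, HasDerivAt
      (fun s => s * Real.sin (π * s) / π + Real.cos (π * s) / π ^ 2) (s * Real.cos (π * s)) s := by
    intro s _
    have h1 : HasDerivAt (fun s : ℝ => π * s) π s := by
      simpa using (hasDerivAt_id s).const_mul π
    have h2 := (((hasDerivAt_id s).mul h1.sin).div_const π).add (h1.cos.div_const (π ^ 2))
    refine HasDerivAt.congr_deriv h2 ?_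
    simp only [id]
    field_simp
    ring
  rw [DD, intervalIntegral.integral_eq_sub_of_hasDerivAt this
    (Continuous.intervalIntegrable (by fun_prop) _ _)]
  simp
  field_simp
  ring

lemma DD_anti {h : ℝ} (h0 : 0 ≤ h) (h1 : h ≤ π) : DD π ≤ DD h := by
  apply intervalIntegral.integral_mono_on zero_le_one
    (Continuous.intervalIntegrable (by fun_prop) _ _)
    (Continuous.intervalIntegrable (by fun_prop) _ _)
  intro s hs
  apply mul_le_mul_of_nonneg_left _ hs.1
  apply Real.cos_le_cos_of_nonneg_of_le_pi
  · exact mul_nonneg h0 hs.1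
  · nlinarith [hs.2, Real.pi_pos]
  · exact mul_le_mul_of_nonneg_right h1 hs.1

lemma JJ_tangent1 {h t : ℝ} (h0 : 0 ≤ h) (h1 : h ≤ π) (t0 : 0 ≤ t) (t1 : t ≤ π) :
    JJ t ≤ JJ h + DD h * (t - h) := by
  rw [JJ, JJ, DD, ← intervalIntegral.integral_mul_const, ← intervalIntegral.integral_add
    (Continuous.intervalIntegrable (by fun_prop) _ _)
    (Continuous.intervalIntegrable (by fun_prop) _ _)]
  apply intervalIntegral.integral_mono_on zero_le_one
    (Continuous.intervalIntegrable (by fun_prop) _ _)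
    (Continuous.intervalIntegrable (by fun_prop) _ _)
  intro s hs
  have := sin_tangent (x := t * s) (y := h * s) ⟨mul_nonneg t0 hs.1, by nlinarith [hs.2, hs.1]⟩
    ⟨mul_nonneg h0 hs.1, by nlinarith [hs.2, hs.1]⟩
  linarith

lemma JJ_tangent2 {t : ℝ} (t0 : π ≤ t) (t1 : t ≤ 2 * π) :
    JJ t ≤ JJ π + DD π * (t - π) := by
  have hp := Real.pi_pos
  have e1 := mul_JJ t
  have e2 := mul_JJ π
  have e3 : JJ π = 2 / π := by
    rw [eq_div_iff hp.ne']; rw [Real.cos_pi] at e2; linarith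
  rw [e3, DD_pi]
  have htp : 0 < t := by linarith
  have e4 : JJ t = (1 - Real.cos t) / t := by rw [eq_div_iff htp.ne']; linarith
  rw [e4, div_le_iff₀ htp]
  have hj := Real.mul_le_sin (x := (t - π) / 2) (by linarith) (by linarith)
  have hc : Real.cos t = - Real.cos (t - π) := by rw [Real.cos_sub_pi]; ring
  have hs : Real.cos (t - π) = 1 - 2 * Real.sin ((t - π) / 2) ^ 2 := by
    have := Real.cos_two_mul ((t - π) / 2)
    have h3 := Real.sin_sq_add_cos_sq ((t - π) / 2)
    rw [show 2 * ((t - π) / 2) = t - π by ring] at this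
    linarith
  have hsq : (2 / π * ((t - π) / 2)) ^ 2 ≤ Real.sin ((t - π) / 2) ^ 2 := by
    apply pow_le_pow_left₀ _ hj
    have : 0 ≤ t - π := by linarith
    positivity
  have e5 : (2 / π + -2 / π ^ 2 * (t - π)) * t = 2 - 2 * (2 / π * ((t - π) / 2)) ^ 2 := by
    field_simp; ring
  rw [e5, hc, hs]
  linarith

lemma JJ_tangent {h t : ℝ} (h0 : 0 ≤ h) (h1 : h ≤ π) (t0 : 0 ≤ t) (t1 : t ≤ 2 * π) :
    JJ t ≤ JJ h + DD h * (t - h) := by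
  rcases le_total t π with ht | ht
  · exact JJ_tangent1 h0 h1 t0 ht
  · have a1 := JJ_tangent2 ht t1
    have a2 := JJ_tangent1 h0 h1 Real.pi_pos.le le_rfl
    have a3 := mul_le_mul_of_nonneg_right (DD_anti h0 h1) (sub_nonneg.2 ht)
    linarith

lemma bath_int {t : ℝ} (t0 : 0 ≤ t) (t1 : t ≤ 2 * π) :
    ∫ u in (-π)..π, max (Real.cos u - Real.cos (t / 2)) 0 =
      2 * Real.sin (t / 2) - t * Real.cos (t / 2) := by
  have hi : ∀ x y : ℝ, IntervalIntegrable (fun u => max (Real.cos u - Real.cos (t / 2)) 0)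
      volume x y := fun x y => Continuous.intervalIntegrable (by fun_prop) _ _
  rw [← intervalIntegral.integral_add_adjacent_intervals (hi _ (-(t / 2))) (hi _ _),
    ← intervalIntegral.integral_add_adjacent_intervals (hi (-(t / 2)) (t / 2)) (hi _ _)]
  have z1 : ∫ u in (-π)..(-(t / 2)), max (Real.cos u - Real.cos (t / 2)) 0 = 0 := by
    refine Eq.trans (intervalIntegral.integral_congr (g := fun _ => (0:ℝ)) ?_)
      intervalIntegral.integral_zero
    intro u hu
    rw [Set.uIcc_of_le (by linarith)] at hu
    have := Real.cos_le_cos_of_nonneg_of_le_pi (x := t / 2) (y := -u) (by linarith)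
      (by linarith [hu.1]) (by linarith [hu.2])
    rw [Real.cos_neg] at this
    exact max_eq_right (sub_nonpos.2 this)
  have z2 : ∫ u in (t / 2)..π, max (Real.cos u - Real.cos (t / 2)) 0 = 0 := by
    refine Eq.trans (intervalIntegral.integral_congr (g := fun _ => (0:ℝ)) ?_)
      intervalIntegral.integral_zero
    intro u hu
    rw [Set.uIcc_of_le (by linarith)] at hu
    have := Real.cos_le_cos_of_nonneg_of_le_pi (x := t / 2) (y := u) (by linarith)
      (by linarith [hu.2]) (by linarith [hu.1])
    exact max_eq_right (sub_nonpos.2 this)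
  have z3 : ∫ u in (-(t / 2))..(t / 2), max (Real.cos u - Real.cos (t / 2)) 0 =
      ∫ u in (-(t / 2))..(t / 2), (Real.cos u - Real.cos (t / 2)) := by
    apply intervalIntegral.integral_congr
    intro u hu
    rw [Set.uIcc_of_le (by linarith)] at hu
    have := Real.cos_le_cos_of_nonneg_of_le_pi (x := |u|) (y := t / 2) (abs_nonneg _)
      (by linarith) (abs_le.2 hu)
    rw [Real.cos_abs] at this
    exact max_eq_left (by linarith)
  rw [z1, z2, z3, intervalIntegral.integral_sub
    (Continuous.intervalIntegrable (by fun_prop) _ _)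
    (Continuous.intervalIntegrable (by fun_prop) _ _), integral_cos,
    intervalIntegral.integral_const, Real.sin_neg, smul_eq_mul]
  ring

lemma cont_intOn {a b : ℝ} {A : Set ℝ} (hAs : A ⊆ Set.Icc a b) {f : ℝ → ℝ} (hf : Continuous f) :
    IntegrableOn f A := (hf.continuousOn.integrableOn_Icc).mono_set hAs

lemma bathtub {a b φ : ℝ} (h : b - a ≤ 2 * π) {A : Set ℝ} (hA : MeasurableSet A)
    (hAs : A ⊆ Set.Icc a b) :
    ∫ u in A, Real.cos (u - φ) ≤ 2 * Real.sin (volume.real A / 2) := by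
  set t := volume.real A with ht
  have hfin : volume A ≠ ⊤ := ((measure_mono hAs).trans_lt (by simp)).ne
  have hAs' : A ⊆ Set.Icc a (a + 2 * π) := hAs.trans (Set.Icc_subset_Icc_right (by linarith))
  have t0 : 0 ≤ t := measureReal_nonneg
  have t1 : t ≤ 2 * π := by
    have := measureReal_mono (μ := volume) hAs' measure_Icc_lt_top.ne
    rw [Real.volume_real_Icc_of_le (by linarith [Real.pi_pos])] at this
    linarith
  set k := Real.cos (t / 2)
  have s1 : ∫ u in A, (Real.cos (u - φ) - k) ≤ ∫ u in A, max (Real.cos (u - φ) - k) 0 :=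
    integral_mono (cont_intOn hAs (by fun_prop)) (cont_intOn hAs (by fun_prop))
      (fun u => le_max_left _ _)
  have s2 : ∫ u in A, max (Real.cos (u - φ) - k) 0 ≤
      ∫ u in Set.Icc a (a + 2 * π), max (Real.cos (u - φ) - k) 0 := by
    apply setIntegral_mono_set (cont_intOn subset_rfl (by fun_prop))
    · exact Eventually.of_forall fun u => le_max_right _ _
    · exact hAs'.eventuallyLE
  have s3 : ∫ u in Set.Icc a (a + 2 * π), max (Real.cos (u - φ) - k) 0 =
      2 * Real.sin (t / 2) - t * k := by
    rw [integral_Icc_eq_integral_Ioc, ← intervalIntegral.integral_of_le (by linarith [Real.pi_pos])]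
    have hper : Function.Periodic (fun u => max (Real.cos (u - φ) - k) 0) (2 * π) := by
      intro u
      simp only
      rw [show u + 2 * π - φ = u - φ + 2 * π by ring, Real.cos_add_two_pi]
    rw [hper.intervalIntegral_add_eq a (φ - π),
      intervalIntegral.integral_comp_sub_right (fun u => max (Real.cos u - k) 0),
      show φ - π - φ = -π by ring, show φ - π + 2 * π - φ = π by ring, bath_int t0 t1]
  rw [integral_sub (cont_intOn hAs (by fun_prop)) (cont_intOn hAs (by fun_prop)),
    setIntegral_const, smul_eq_mul] at s1
  linarith

lemma exists_polar (c : E2) : ∃ ρ φ : ℝ, 0 ≤ ρ ∧ c = pt (ρ * Real.cos φ) (ρ * Real.sin φ) := by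
  refine ⟨‖(⟨c 0, c 1⟩ : ℂ)‖, Complex.arg ⟨c 0, c 1⟩, norm_nonneg _, ?_⟩
  rw [Complex.norm_mul_cos_arg, Complex.norm_mul_sin_arg]
  exact (pt_eta c).symm

lemma dist_polar (u ρ φ : ℝ) : ‖gam u - pt (ρ * Real.cos φ) (ρ * Real.sin φ)‖ ^ 2 =
    (1 + ρ ^ 2) - 2 * ρ * Real.cos (u - φ) := by
  rw [gam, pt_sub, norm_pt_sq, Real.cos_sub]
  linear_combination Real.sin_sq_add_cos_sq u + ρ ^ 2 * Real.sin_sq_add_cos_sq φ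

lemma piece {a b : ℝ} (h : b - a ≤ 2 * π) {A : Set ℝ} (hA : MeasurableSet A)
    (hAs : A ⊆ Set.Icc a b) (c : E2) :
    volume.real A - 2 * JJ (volume.real A) ≤ ∫ u in A, ‖gam u - c‖ ^ 2 := by
  obtain ⟨ρ, φ, hρ, rfl⟩ := exists_polar c
  simp_rw [dist_polar]
  rw [integral_sub (cont_intOn hAs (by fun_prop)) (cont_intOn hAs (by fun_prop)),
    setIntegral_const, smul_eq_mul, integral_const_mul]
  have hb := bathtub (φ := φ) h hA hAs
  set t := volume.real A
  have t0 : 0 ≤ t := measureReal_nonneg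
  have hJ := mul_JJ t
  have hcos : Real.cos t = 1 - 2 * Real.sin (t / 2) ^ 2 := by
    have := Real.cos_two_mul (t / 2)
    have h3 := Real.sin_sq_add_cos_sq (t / 2)
    rw [show 2 * (t / 2) = t by ring] at this
    linarith
  have key : 4 * ρ * Real.sin (t / 2) ≤ t * ρ ^ 2 + 2 * JJ t := by
    rcases t0.eq_or_lt with h0 | h0
    · rw [← h0]; simp [JJ]
    · have : 0 ≤ t * (t * ρ ^ 2 + 2 * JJ t - 4 * ρ * Real.sin (t / 2)) := by
        nlinarith [sq_nonneg (t * ρ - 2 * Real.sin (t / 2))]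
      have := nonneg_of_mul_nonneg_right this h0
      linarith
  have := mul_le_mul_of_nonneg_left hb (by positivity : 0 ≤ 2 * ρ)
  linarith

lemma sum_JJ {T : ℝ} (hT0 : 0 < T) (hT : T ≤ 2 * π) {n : ℕ} (hn : 1 ≤ n) (t : ℕ → ℝ)
    (ht : ∀ i, 0 ≤ t i) (hs : ∑ i ∈ Finset.range n, t i = T) :
    ∑ i ∈ Finset.range n, JJ (t i) ≤ n * JJ (T / n) := by
  have hn0 : (0:ℝ) < n := by exact_mod_cast hn
  rcases hn.eq_or_lt with rfl | hn2
  · simp at hs; simp [hs]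
  have hn2' : (2:ℝ) ≤ n := by exact_mod_cast hn2
  have hh : T / n ≤ π := by rw [div_le_iff₀ hn0]; nlinarith [Real.pi_pos]
  calc ∑ i ∈ Finset.range n, JJ (t i)
      ≤ ∑ i ∈ Finset.range n, (JJ (T / n) + DD (T / n) * (t i - T / n)) := by
        apply Finset.sum_le_sum
        intro i hi
        apply JJ_tangent (by positivity) hh (ht i)
        have := Finset.single_le_sum (fun i _ => ht i) hi
        linarith
    _ = n * JJ (T / n) := by
        rw [Finset.sum_add_distrib, ← Finset.mul_sum, Finset.sum_sub_distrib, hs]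
        simp
        right; field_simp; ring

lemma err_eq {T : ℝ} (hT0 : 0 < T) {n : ℕ} (hn : 1 ≤ n) :
    T - 2 * (n * JJ (T / n)) =
      T * (1 - 4 * (n:ℝ) ^ 2 / T ^ 2 * Real.sin (T / (2 * n)) ^ 2) := by
  have hn0 : (0:ℝ) < n := by exact_mod_cast hn
  have hJ := mul_JJ (T / n)
  have hcos : Real.cos (T / n) = 1 - 2 * Real.sin (T / (2 * n)) ^ 2 := by
    have := Real.cos_two_mul (T / (2 * n))
    have h3 := Real.sin_sq_add_cos_sq (T / (2 * n))
    rw [show 2 * (T / (2 * n)) = T / n by field_simp] at this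
    linarith
  rw [hcos] at hJ
  have : JJ (T / n) = 2 * Real.sin (T / (2 * n)) ^ 2 * (n / T) := by
    field_simp
    field_simp at hJ
    linarith
  rw [this]
  field_simp
  ring

lemma lower {a b : ℝ} (hab : a < b) (h : b - a ≤ 2 * π) {n : ℕ} (hn : 1 ≤ n) {α : Set E2}
    (hf : α.Finite) (hne : α.Nonempty) (hc : α.ncard ≤ n) :
    (b - a) * (1 - 4 * (n:ℝ) ^ 2 / (b - a) ^ 2 * Real.sin ((b - a) / (2 * n)) ^ 2) ≤
      ∫ u in Set.Icc a b, sInf ((fun c => ‖gam u - c‖ ^ 2) '' α) := by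
  obtain ⟨e, he⟩ : ∃ e : ℕ → E2, ∀ c ∈ α, ∃ i < n, e i = c := by
    have : Finite α := hf
    let f := Finite.equivFin α
    have hcard : Nat.card α ≤ n := hc
    obtain ⟨c0, _⟩ := hne
    refine ⟨fun i => if hi : i < Nat.card α then (f.symm ⟨i, hi⟩ : E2) else c0, ?_⟩
    intro c hcα
    refine ⟨f ⟨c, hcα⟩, (f ⟨c, hcα⟩).2.trans_le hcard, ?_⟩
    simp only [Fin.is_lt, dite_true, Fin.eta]
    rw [Equiv.symm_apply_apply]
  obtain ⟨N, rfl⟩ : ∃ N, n = N + 1 := ⟨n - 1, by omega⟩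
  let ind := SimpleFunc.nearestPtInd e N
  let A : ℕ → Set ℝ := fun i => Set.Icc a b ∩ gam ⁻¹' (ind ⁻¹' {i})
  have hAm : ∀ i, MeasurableSet (A i) := fun i =>
    measurableSet_Icc.inter (gam_cont.measurable (ind.measurableSet_fiber i))
  have hAs : ∀ i, A i ⊆ Set.Icc a b := fun i => Set.inter_subset_left
  have hAd : (↑(Finset.range (N + 1)) : Set ℕ).PairwiseDisjoint A := by
    intro i _ j _ hij
    rw [Function.onFun, Set.disjoint_left]
    rintro u ⟨_, hu⟩ ⟨_, hu'⟩
    exact hij (by simpa using (hu.symm.trans hu'))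
  have hAU : ⋃ i ∈ Finset.range (N + 1), A i = Set.Icc a b := by
    ext u
    simp only [Set.mem_iUnion, Finset.mem_range]
    constructor
    · rintro ⟨i, _, hu⟩; exact hu.1
    · intro hu
      exact ⟨ind (gam u), Nat.lt_succ_of_le (SimpleFunc.nearestPtInd_le e N _), hu, rfl⟩
  have hcont : Continuous fun u => sInf ((fun c => ‖gam u - c‖ ^ 2) '' α) :=
    (cont_sInf hf hne).comp gam_cont
  have hcI : ∀ i, Continuous fun u => ‖gam u - e i‖ ^ 2 := fun i => by
    have := gam_cont
    fun_prop
  have hsum : ∑ i ∈ Finset.range (N + 1), volume.real (A i) = b - a := by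
    rw [← measureReal_biUnion_finset hAd (fun i _ => hAm i)
      (fun i _ => ((measure_mono (hAs i)).trans_lt (by simp)).ne), hAU,
      Real.volume_real_Icc_of_le hab.le]
  conv_rhs => rw [← hAU]
  rw [integral_biUnion_finset _ (fun i _ => hAm i) hAd (fun i _ => cont_intOn (hAs i) hcont)]
  have hstep : ∑ i ∈ Finset.range (N + 1), (volume.real (A i) - 2 * JJ (volume.real (A i))) ≤
      ∑ i ∈ Finset.range (N + 1), ∫ u in A i, sInf ((fun c => ‖gam u - c‖ ^ 2) '' α) := by
    apply Finset.sum_le_sum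
    intro i _
    refine (piece h (hAm i) (hAs i) (e i)).trans ?_
    apply setIntegral_mono_on (cont_intOn (hAs i) (hcI i)) (cont_intOn (hAs i) hcont) (hAm i)
    intro u hu
    apply le_csInf (hne.image _)
    rintro _ ⟨c, hcα, rfl⟩
    obtain ⟨k, hk, rfl⟩ := he c hcα
    have h1 := SimpleFunc.edist_nearestPt_le e (gam u) (Nat.lt_succ_iff.1 hk)
    have h2 : SimpleFunc.nearestPt e N (gam u) = e i := by
      have : ind (gam u) = i := hu.2
      rw [← this]; rfl
    rw [h2, edist_dist, edist_dist, ENNReal.ofReal_le_ofReal_iff dist_nonneg, dist_comm,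
      dist_comm (e k), dist_eq_norm, dist_eq_norm] at h1
    exact pow_le_pow_left₀ (norm_nonneg _) h1 2
  refine le_trans ?_ hstep
  rw [Finset.sum_sub_distrib, hsum, ← Finset.mul_sum, ← err_eq (by linarith) hn]
  have := sum_JJ (T := b - a) (by linarith) h hn (fun i => volume.real (A i))
    (fun i => measureReal_nonneg) hsum
  linarith

lemma upper {a b : ℝ} (hab : a < b) {n : ℕ} (hn : 1 ≤ n) {α : Set E2}
    (hf : α.Finite) (hne : α.Nonempty)
    (hα : ∀ j : ℕ, 1 ≤ j → j ≤ n →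
        pt ((2 * n / (b - a)) * Real.sin ((b - a) / (2 * n)) *
              Real.cos (a + (2 * (j : ℝ) - 1) * (b - a) / (2 * n)))
            ((2 * n / (b - a)) * Real.sin ((b - a) / (2 * n)) *
              Real.sin (a + (2 * (j : ℝ) - 1) * (b - a) / (2 * n))) ∈ α) :
      ∫ u in Set.Icc a b, sInf ((fun c => ‖gam u - c‖ ^ 2) '' α) ≤
    (b - a) * (1 - 4 * (n:ℝ) ^ 2 / (b - a) ^ 2 * Real.sin ((b - a) / (2 * n)) ^ 2) := by
  have hn0 : (0:ℝ) < n := by exact_mod_cast hn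
  have hT : 0 < b - a := by linarith
  set r := 2 * n / (b - a) * Real.sin ((b - a) / (2 * n)) with hr
  set h := (b - a) / n with hh
  have hh0 : 0 < h := by positivity
  have hcont : Continuous fun u => sInf ((fun c => ‖gam u - c‖ ^ 2) '' α) :=
    (cont_sInf hf hne).comp gam_cont
  let p : ℕ → ℝ := fun i => a + i * h
  have hsplit := intervalIntegral.sum_integral_adjacent_intervals (μ := volume) (n := n) (a := p)
    (f := fun u => sInf ((fun c => ‖gam u - c‖ ^ 2) '' α))
    (fun k _ => hcont.intervalIntegrable _ _)
  have hpn : p n = b := by simp only [p, hh]; field_simp; ring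
  have hp0 : p 0 = a := by simp [p]
  rw [hpn, hp0] at hsplit
  rw [integral_Icc_eq_integral_Ioc, ← intervalIntegral.integral_of_le hab.le, ← hsplit]
  have hstep : ∀ i ∈ Finset.range n,
      ∫ u in (p i)..(p (i + 1)), sInf ((fun c => ‖gam u - c‖ ^ 2) '' α) ≤ h * (1 - r ^ 2) := by
    intro i hi
    have hm := hα (i + 1) (by omega) (by have := Finset.mem_range.1 hi; omega)
    set m := a + (2 * ((i + 1 : ℕ) : ℝ) - 1) * (b - a) / (2 * n) with hmdef
    have hm1 : p i - m = -(h / 2) := by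
      simp only [p, hmdef, hh]; push_cast; field_simp; ring
    have hm2 : p (i + 1) - m = h / 2 := by
      simp only [p, hmdef, hh]; push_cast; field_simp; ring
    have hle : p i ≤ p (i + 1) := by linarith
    calc ∫ u in (p i)..(p (i + 1)), sInf ((fun c => ‖gam u - c‖ ^ 2) '' α)
        ≤ ∫ u in (p i)..(p (i + 1)), ((1 + r ^ 2) - 2 * r * Real.cos (u - m)) := by
          apply intervalIntegral.integral_mono_on hle (hcont.intervalIntegrable _ _)
            (Continuous.intervalIntegrable (by fun_prop) _ _)
          intro u _
          rw [← dist_polar]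
          refine csInf_le ⟨0, ?_⟩ ⟨_, hm, rfl⟩
          rintro _ ⟨c, _, rfl⟩
          positivity
      _ = h * (1 - r ^ 2) := by
          rw [intervalIntegral.integral_sub
            (Continuous.intervalIntegrable (by fun_prop) _ _)
            (Continuous.intervalIntegrable (by fun_prop) _ _), intervalIntegral.integral_const,
            intervalIntegral.integral_const_mul,
            intervalIntegral.integral_comp_sub_right (fun u => Real.cos u), hm1, hm2, integral_cos,
            Real.sin_neg, smul_eq_mul, show p (i + 1) - p i = h by linarith]
          have : 2 * Real.sin (h / 2) = r * h := by
            rw [hr, hh, show (b - a) / n / 2 = (b - a) / (2 * n) by field_simp]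
            field_simp
          linear_combination (-2 * r) * this
  refine (Finset.sum_le_sum hstep).trans (le_of_eq ?_)
  rw [Finset.sum_const, Finset.card_range, nsmul_eq_mul, hh, hr]
  field_simp
  try ring

/-- For the uniform distribution on the unit circular arc
`S = {(cos θ, sin θ) : a ≤ θ ≤ b}` with `0 ≤ a < b ≤ 2π`, for every `n ≥ 1` the
set `{(2n/(b-a)) sin((b-a)/(2n)) (cos(a+(2j-1)(b-a)/(2n)), sin(a+(2j-1)(b-a)/(2n))) :
j = 1, …, n}` forms an optimal set of `n`-means, and
`Vₙ = 1 - (4n²/(b-a)²) sin²((b-a)/(2n))`. -/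
theorem stmt_10 (a b : ℝ) (h0 : 0 ≤ a) (hab : a < b) (h2 : b ≤ 2 * Real.pi)
    (n : ℕ) (hn : 1 ≤ n) :
    IsOptimalSet (arcP a b) n
      {p | ∃ j : ℕ, 1 ≤ j ∧ j ≤ n ∧
        p = pt ((2 * n / (b - a)) * Real.sin ((b - a) / (2 * n)) *
              Real.cos (a + (2 * (j : ℝ) - 1) * (b - a) / (2 * n)))
            ((2 * n / (b - a)) * Real.sin ((b - a) / (2 * n)) *
              Real.sin (a + (2 * (j : ℝ) - 1) * (b - a) / (2 * n)))} ∧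
    quantErr (arcP a b) n =
      1 - (4 * (n : ℝ) ^ 2 / (b - a) ^ 2) * Real.sin ((b - a) / (2 * n)) ^ 2 := by
  have h : b - a ≤ 2 * π := by linarith
  have hT : 0 < b - a := by linarith
  set F : ℕ → E2 := fun j => pt ((2 * n / (b - a)) * Real.sin ((b - a) / (2 * n)) *
              Real.cos (a + (2 * (j : ℝ) - 1) * (b - a) / (2 * n)))
            ((2 * n / (b - a)) * Real.sin ((b - a) / (2 * n)) *
              Real.sin (a + (2 * (j : ℝ) - 1) * (b - a) / (2 * n))) with hF
  have hset : {p | ∃ j : ℕ, 1 ≤ j ∧ j ≤ n ∧ p = F j} = F '' (Finset.Icc 1 n : Finset ℕ) := by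
    ext p
    simp only [Set.mem_ofPred_eq, Set.mem_image, Finset.coe_Icc, Set.mem_Icc]
    constructor
    · rintro ⟨j, h1, h2, rfl⟩; exact ⟨j, ⟨h1, h2⟩, rfl⟩
    · rintro ⟨j, ⟨h1, h2⟩, rfl⟩; exact ⟨j, h1, h2, rfl⟩
  change IsOptimalSet (arcP a b) n {p | ∃ j : ℕ, 1 ≤ j ∧ j ≤ n ∧ p = F j} ∧ _
  rw [hset]
  set α : Set E2 := F '' (Finset.Icc 1 n : Finset ℕ) with hα
  have hfin : α.Finite := (Finset.finite_toSet _).image _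
  have hne : α.Nonempty := ⟨F 1, 1, by simpa using hn, rfl⟩
  have hcard : α.ncard ≤ n := by
    refine (Set.ncard_image_le (Finset.finite_toSet _)).trans ?_
    rw [Set.ncard_coe_finset]; simp
  set V := 1 - (4 * (n : ℝ) ^ 2 / (b - a) ^ 2) * Real.sin ((b - a) / (2 * n)) ^ 2 with hV
  have hlow : ∀ s : Set E2, s.Finite → s.Nonempty → s.ncard ≤ n →
      V ≤ ∫ x, sInf ((fun a => ‖x - a‖ ^ 2) '' s) ∂(arcP a b) := by
    intro s h1 h2 h3
    rw [integral_arcP hab h (cont_sInf h1 h2), inv_mul_eq_div, le_div_iff₀ hT, mul_comm]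
    exact lower hab h hn h1 h2 h3
  have hup : ∫ x, sInf ((fun a => ‖x - a‖ ^ 2) '' α) ∂(arcP a b) ≤ V := by
    rw [integral_arcP hab h (cont_sInf hfin hne), inv_mul_eq_div, div_le_iff₀ hT, mul_comm V]
    apply upper hab hn hfin hne
    intro j h1 h2
    exact ⟨j, by simpa using ⟨h1, h2⟩, rfl⟩
  have heq := le_antisymm hup (hlow α hfin hne hcard)
  have hq : quantErr (arcP a b) n = V := by
    apply IsLeast.csInf_eq
    refine ⟨⟨α, hfin, hne, hcard, heq.symm⟩, ?_⟩
    rintro v ⟨s, h1, h2, h3, rfl⟩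
    exact hlow s h1 h2 h3
  exact ⟨⟨hfin, hne, hcard, heq.trans hq.symm⟩, hq⟩
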